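/- arXiv:2401.07706 — 3 statements merged into one kernel-verified Lean document; each statement's English description precedes it below -/
import Mathlib

section
/- Let τ2 ≥ τ1 ≥ 0. The switched system ẋ(t) = f_{σ(t)}(x(t)) is globally uniformly asymptotically stable (GUAS) on the class S_dw(τ1,τ2) if and only if it is GUAS on the class S*_dw(τ1,τ2). -/
open Filter Set
open scoped Classical

noncomputable section

/-- A switching signal `σ : [0,∞) → {1,…,M}` (piecewise constant, right continuous),
encoded by the (possibly finite) strictly increasing sequence of its switching instants
`T 1 < T 2 < …` (the discontinuity points, with the convention `T 0 = 0`, and `num` the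
extended-natural number of switching instants) together with the value `idx k ∈ Fin M`
taken on the `k`-th inter-switching interval `[T k, T (k+1))`. Beyond the last switching
instant the time sequence is frozen, and if there are infinitely many switching instants
they tend to `+∞`. At each switching instant the value actually changes. -/
structure Signal (M : ℕ) where
  idx : ℕ → Fin M
  T : ℕ → ℝ
  num : ℕ∞
  T0 : T 0 = 0
  mono : ∀ k : ℕ, T k ≤ T (k + 1)
  strict : ∀ k : ℕ, (k : ℕ∞) < num → T k < T (k + 1)
  frozen : ∀ k : ℕ, num ≤ (k : ℕ∞) → T (k + 1) = T k
  change : ∀ k : ℕ, (k : ℕ∞) < num → idx k ≠ idx (k + 1)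
  unbounded : num = ⊤ → Tendsto T atTop atTop

/-- The index of the inter-switching interval containing time `t`. -/
def Signal.seg {M : ℕ} (s : Signal M) (t : ℝ) : ℕ :=
  sSup {k : ℕ | (k : ℕ∞) ≤ s.num ∧ s.T k ≤ t}

/-- Given the flow maps `Φ i` of the subsystems, the state of the switched system at the
`k`-th switching instant, starting from `x` at time `0`. -/
def Signal.state {M : ℕ} {E : Type*} (Φ : Fin M → ℝ → E → E) (s : Signal M) (x : E) : ℕ → E
  | 0 => x
  | k + 1 =>
    if (k : ℕ∞) < s.num then
      Φ (s.idx k) (s.T (k + 1) - s.T k) (Signal.state Φ s x k)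
    else Signal.state Φ s x k

/-- The solution `Φ_σ(t,x)` of the switched system associated to the flow maps `Φ i` of the
subsystems, for the switching signal `s`, starting at `x` (at time `0`), evaluated at time `t`. -/
def Signal.sol {M : ℕ} {E : Type*} (Φ : Fin M → ℝ → E → E) (s : Signal M) (t : ℝ) (x : E) : E :=
  Φ (s.idx (s.seg t)) (t - s.T (s.seg t)) (Signal.state Φ s x (s.seg t))

/-- The class `S_dw(τ1,τ2)`: switching signals with `τ1 ≤ t_k − t_{k−1} ≤ τ2` for every
switching instant `t_k > 0`. -/
def Sdw (M : ℕ) (τ1 τ2 : ℝ) : Set (Signal M) :=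
  {s | ∀ k : ℕ, (k : ℕ∞) < s.num →
    τ1 ≤ s.T (k + 1) - s.T k ∧ s.T (k + 1) - s.T k ≤ τ2}

/-- The class `S*_dw(τ1,τ2)`: switching signals with `τ1 ≤ t_{k+1} − t_k ≤ τ2` for every
switching instant `t_k > 0`, and with `t_1 ≤ τ2`. -/
def SdwStar (M : ℕ) (τ1 τ2 : ℝ) : Set (Signal M) :=
  {s | (∀ k : ℕ, 1 ≤ k → (k : ℕ∞) < s.num →
      τ1 ≤ s.T (k + 1) - s.T k ∧ s.T (k + 1) - s.T k ≤ τ2) ∧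
    (1 ≤ s.num → s.T 1 ≤ τ2)}

/-- A function `α : [0,∞) → [0,∞)` of class `K∞`: continuous, vanishing at `0`,
strictly increasing and unbounded. -/
def ClassKInf (α : ℝ → ℝ) : Prop :=
  ContinuousOn α (Ici 0) ∧ α 0 = 0 ∧ StrictMonoOn α (Ici 0) ∧
    Tendsto α atTop atTop ∧ ∀ r ∈ Ici (0 : ℝ), 0 ≤ α r

/-- A function `β : [0,∞) × [0,∞) → [0,∞)` of class `KL`. -/
def ClassKL (β : ℝ → ℝ → ℝ) : Prop :=
  ContinuousOn (Function.uncurry β) (Ici 0 ×ˢ Ici 0) ∧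
  (∀ s ∈ Ici (0 : ℝ), β 0 s = 0 ∧ StrictMonoOn (fun r => β r s) (Ici 0)) ∧
  (∀ r ∈ Ici (0 : ℝ), AntitoneOn (β r) (Ici 0) ∧ Tendsto (β r) atTop (nhds 0)) ∧
  (∀ r ∈ Ici (0 : ℝ), ∀ s ∈ Ici (0 : ℝ), 0 ≤ β r s)

/-- Global uniform asymptotic stability (GUAS) of the switched system with subsystem flows
`Φ i` over the class `S` of switching signals. -/
def GUAS {M : ℕ} {E : Type*} [NormedAddCommGroup E] (Φ : Fin M → ℝ → E → E)
    (S : Set (Signal M)) : Prop :=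
  ∃ β : ℝ → ℝ → ℝ, ClassKL β ∧
    ∀ s ∈ S, ∀ x : E, ∀ t ≥ (0 : ℝ), ‖Signal.sol Φ s t x‖ ≤ β ‖x‖ t

/-- Uniform exponential stability with decay `ρ` (`ρ`-UES) of the switched system with
subsystem flows `Φ i` over the class `S` of switching signals. -/
def UES {M : ℕ} {E : Type*} [NormedAddCommGroup E] (ρ : ℝ) (Φ : Fin M → ℝ → E → E)
    (S : Set (Signal M)) : Prop :=
  ∃ C : ℝ, 0 ≤ C ∧ ∀ s ∈ S, ∀ x : E, ∀ t ≥ (0 : ℝ),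
    ‖Signal.sol Φ s t x‖ ≤ C * Real.exp (-ρ * t) * ‖x‖

def Signal.const {M : ℕ} (i : Fin M) : Signal M where
  idx := fun _ => i
  T := fun _ => 0
  num := 0
  T0 := rfl
  mono := fun _ => le_rfl
  strict := fun k h => by simp at h
  frozen := fun _ _ => rfl
  change := fun k h => by simp at h
  unbounded := fun h => by simp at h

theorem Signal.const_sol {M : ℕ} {E : Type*} (Φ : Fin M → ℝ → E → E) (i : Fin M) (t : ℝ)
    (ht : 0 ≤ t) (x : E) : Signal.sol Φ (Signal.const i) t x = Φ i t x := by
  have h : (Signal.const i).seg t = 0 := by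
    have : {k : ℕ | (k : ℕ∞) ≤ (Signal.const i).num ∧ (Signal.const i).T k ≤ t} = {0} := by
      ext k
      simp [Signal.const, ht]
    rw [Signal.seg, this, csSup_singleton]
  rw [Signal.sol, h]
  simp [Signal.const, Signal.state]

theorem lt_shift_num {N : ℕ∞} (k : ℕ) : (k : ℕ∞) < N - 1 ↔ ((k + 1 : ℕ) : ℕ∞) < N := by
  push_cast
  exact lt_tsub_iff_right

theorem le_shift_num {N : ℕ∞} (h : 1 ≤ N) (k : ℕ) :
    (k : ℕ∞) ≤ N - 1 ↔ ((k + 1 : ℕ) : ℕ∞) ≤ N := by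
  cases N with
  | top => simp
  | coe N =>
    have h' : 1 ≤ N := by exact_mod_cast h
    have : ((N : ℕ∞) - 1) = ((N - 1 : ℕ) : ℕ∞) := by push_cast; rfl
    rw [this, Nat.cast_le, Nat.cast_le]
    omega

def Signal.shift {M : ℕ} (s : Signal M) (h : 1 ≤ s.num) : Signal M where
  idx := fun k => s.idx (k + 1)
  T := fun k => s.T (k + 1) - s.T 1
  num := s.num - 1
  T0 := by simp
  mono := fun k => by have := s.mono (k + 1); linarith
  strict := fun k hk => by
    have := s.strict (k + 1) ((lt_shift_num k).1 hk); linarith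
  frozen := fun k hk => by
    have := s.frozen (k + 1) (not_lt.1 fun h' => absurd ((lt_shift_num k).2 h') (not_lt.2 hk))
    rw [this]
  change := fun k hk => s.change (k + 1) ((lt_shift_num k).1 hk)
  unbounded := fun hk => by
    have h1 : s.num = ⊤ := by
      by_contra hne
      obtain ⟨N, hN⟩ := ENat.ne_top_iff_exists.1 hne
      have h2 : ((N : ℕ∞) - 1) ≤ N := tsub_le_self
      rw [hN, hk] at h2
      exact hne (top_le_iff.1 h2)
    have := (tendsto_add_atTop_iff_nat 1).2 (s.unbounded h1)
    simpa [sub_eq_add_neg] using tendsto_atTop_add_const_right atTop (-s.T 1) this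

theorem Signal.T_mono {M : ℕ} (s : Signal M) : Monotone s.T := monotone_nat_of_le_succ s.mono

theorem Signal.seg_greatest {M : ℕ} (s : Signal M) {t : ℝ} (ht : 0 ≤ t) :
    IsGreatest {k : ℕ | (k : ℕ∞) ≤ s.num ∧ s.T k ≤ t} (s.seg t) := by
  have hb : BddAbove {k : ℕ | (k : ℕ∞) ≤ s.num ∧ s.T k ≤ t} := by
    by_cases hn : s.num = ⊤
    · obtain ⟨K, hK⟩ := ((s.unbounded hn).eventually_gt_atTop t).exists
      refine ⟨K, fun k hk => ?_⟩
      by_contra hlt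
      have := s.T_mono (not_le.1 hlt).le
      linarith [hk.2]
    · obtain ⟨N, hN⟩ := ENat.ne_top_iff_exists.1 hn
      refine ⟨N, fun k hk => ?_⟩
      have := hk.1
      rw [← hN] at this
      exact_mod_cast this
  have hne : {k : ℕ | (k : ℕ∞) ≤ s.num ∧ s.T k ≤ t}.Nonempty := ⟨0, by simp, by rw [s.T0]; exact ht⟩
  exact ⟨Nat.sSup_mem hne hb, fun k hk => le_csSup hb hk⟩

theorem Signal.seg_shift {M : ℕ} (s : Signal M) (h : 1 ≤ s.num) {t : ℝ} (ht : s.T 1 ≤ t) :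
    s.seg t = (s.shift h).seg (t - s.T 1) + 1 := by
  have h0 : (0 : ℝ) ≤ s.T 1 := by have := s.mono 0; rw [s.T0] at this; simpa using this
  have hg := (s.shift h).seg_greatest (sub_nonneg.2 ht)
  refine (s.seg_greatest (h0.trans ht)).unique ⟨⟨?_, ?_⟩, ?_⟩
  · exact (le_shift_num h _).1 hg.1.1
  · have := hg.1.2
    simp only [Signal.shift] at this ⊢
    linarith
  · rintro k ⟨hk1, hk2⟩
    rcases k with _ | k
    · omega
    · have : k ≤ (s.shift h).seg (t - s.T 1) := hg.2 ⟨(le_shift_num h _).2 hk1, by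
        simp only [Signal.shift]; linarith⟩
      omega

theorem Signal.state_shift {M : ℕ} {E : Type*} (Φ : Fin M → ℝ → E → E) (s : Signal M)
    (h : 1 ≤ s.num) (x : E) (k : ℕ) :
    Signal.state Φ s x (k + 1) = Signal.state Φ (s.shift h) (Φ (s.idx 0) (s.T 1) x) k := by
  induction k with
  | zero =>
    have : (0 : ℕ∞) < s.num := lt_of_lt_of_le (by simp) h
    simp [Signal.state, this, s.T0]
  | succ k ih =>
    rw [Signal.state, ih]
    conv_rhs => rw [Signal.state]
    have : ((k : ℕ∞) < (s.shift h).num) ↔ (((k + 1 : ℕ) : ℕ∞) < s.num) := lt_shift_num k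
    simp only [this]
    simp [Signal.shift]

theorem Signal.sol_shift {M : ℕ} {E : Type*} (Φ : Fin M → ℝ → E → E) (s : Signal M)
    (h : 1 ≤ s.num) (x : E) {t : ℝ} (ht : s.T 1 ≤ t) :
    Signal.sol Φ s t x
      = Signal.sol Φ (s.shift h) (t - s.T 1) (Φ (s.idx 0) (s.T 1) x) := by
  rw [Signal.sol, s.seg_shift h ht, s.state_shift Φ h, Signal.sol]
  simp [Signal.shift]

theorem Signal.sol_first {M : ℕ} {E : Type*} (Φ : Fin M → ℝ → E → E) (s : Signal M)
    (x : E) {t : ℝ} (ht0 : 0 ≤ t) (ht : 1 ≤ s.num → t < s.T 1) :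
    Signal.sol Φ s t x = Φ (s.idx 0) t x := by
  have hseg : s.seg t = 0 := by
    have hg := (s.seg_greatest ht0).1
    by_contra hne
    have h1 : 1 ≤ s.seg t := Nat.one_le_iff_ne_zero.2 hne
    have h2 : 1 ≤ s.num := le_trans (by exact_mod_cast h1) hg.1
    have := s.T_mono h1
    linarith [ht h2, hg.2]
  rw [Signal.sol, hseg]
  simp [Signal.state, s.T0]

theorem ClassKL.comp {β : ℝ → ℝ → ℝ} (h : ClassKL β) (c : ℝ) :
    ClassKL (fun r t => β r t + β (β r 0) (max (t - c) 0)) := by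
  obtain ⟨hc, hs, ha, hp⟩ := h
  have z : (0 : ℝ) ∈ Ici (0 : ℝ) := by simp
  have hm : ∀ t : ℝ, max (t - c) 0 ∈ Ici (0 : ℝ) := fun t => mem_Ici.2 (le_max_right _ _)
  refine ⟨?_, ?_, ?_, ?_⟩
  · have h1 : ContinuousOn (fun p : ℝ × ℝ => β p.1 0) (Ici 0 ×ˢ Ici 0) :=
      hc.comp (f := fun p : ℝ × ℝ => (p.1, (0 : ℝ))) (by fun_prop) (fun p hp' => ⟨hp'.1, z⟩)
    have h2 : ContinuousOn (fun p : ℝ × ℝ => β (β p.1 0) (max (p.2 - c) 0)) (Ici 0 ×ˢ Ici 0) :=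
      hc.comp (f := fun p : ℝ × ℝ => (β p.1 0, max (p.2 - c) 0))
        (h1.prodMk (by fun_prop)) (fun p hp' => ⟨hp _ hp'.1 _ z, hm _⟩)
    exact hc.add h2
  · intro t ht
    refine ⟨?_, ?_⟩
    · simp only [(hs t ht).1, (hs 0 z).1, (hs _ (hm t)).1, add_zero]
    · intro a ha' b hb hab
      exact add_lt_add ((hs t ht).2 ha' hb hab)
        ((hs _ (hm t)).2 (hp _ ha' _ z) (hp _ hb _ z) ((hs 0 z).2 ha' hb hab))
  · intro r hr
    refine ⟨?_, ?_⟩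
    · intro a ha' b hb hab
      exact add_le_add ((ha r hr).1 ha' hb hab)
        ((ha _ (hp r hr 0 z)).1 (hm a) (hm b) (max_le_max (by linarith) le_rfl))
    · have h3 : Tendsto (fun t : ℝ => max (t - c) 0) atTop atTop :=
        tendsto_atTop_mono (fun t => le_max_left _ _)
          (by simpa [sub_eq_add_neg] using
            tendsto_atTop_add_const_right atTop (-c) (tendsto_id (α := ℝ)))
      simpa using (ha r hr).2.add ((ha _ (hp r hr 0 z)).2.comp h3)
  · intro r hr t ht
    exact add_nonneg (hp r hr t ht) (hp _ (hp r hr 0 z) _ (hm t))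

/-- Lemma 1: for `τ2 ≥ τ1 ≥ 0`, the switched system is GUAS on
`S_dw(τ1,τ2)` if and only if it is GUAS on `S*_dw(τ1,τ2)`. -/
theorem guas_Sdw_iff_guas_SdwStar {n M : ℕ}
    (f : Fin M → EuclideanSpace ℝ (Fin n) → EuclideanSpace ℝ (Fin n))
    (Φ : Fin M → ℝ → EuclideanSpace ℝ (Fin n) → EuclideanSpace ℝ (Fin n))
    (hlip : ∀ i, LocallyLipschitz (f i))
    (hf0 : ∀ i, f i 0 = 0)
    (hΦ0 : ∀ i x, Φ i 0 x = x)
    (hode : ∀ i x t, HasDerivAt (fun τ => Φ i τ x) (f i (Φ i t x)) t)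
    (huniq : ∀ i (γ : ℝ → EuclideanSpace ℝ (Fin n)),
        (∀ t, HasDerivAt γ (f i (γ t)) t) → ∀ t, γ t = Φ i t (γ 0))
    (τ1 τ2 : ℝ) (hτ1 : 0 ≤ τ1) (hτ12 : τ1 ≤ τ2) :
    GUAS Φ (Sdw M τ1 τ2) ↔ GUAS Φ (SdwStar M τ1 τ2) := by
  constructor
  · rintro ⟨β, hβ, hb⟩
    refine ⟨_, hβ.comp τ2, ?_⟩
    obtain ⟨hc, hs, ha, hp⟩ := hβ
    have z : (0 : ℝ) ∈ Ici (0 : ℝ) := by simp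
    have hm : ∀ t : ℝ, max (t - τ2) 0 ∈ Ici (0 : ℝ) := fun t => mem_Ici.2 (le_max_right _ _)
    have hconst : ∀ i x t, 0 ≤ t → ‖Φ i t x‖ ≤ β ‖x‖ t := by
      intro i x t ht
      have := hb (Signal.const i) (fun k hk => by simp [Signal.const] at hk) x t ht
      rwa [Signal.const_sol Φ i t ht] at this
    intro s hsS x t ht
    have hx : ‖x‖ ∈ Ici (0 : ℝ) := norm_nonneg x
    by_cases hcase : 1 ≤ s.num → t < s.T 1
    · rw [s.sol_first Φ x ht hcase]
      have := hp _ (hp _ hx 0 z) _ (hm t)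
      linarith [hconst (s.idx 0) x t ht]
    · push Not at hcase
      obtain ⟨h1, hT⟩ := hcase
      have hT0 : (0 : ℝ) ≤ s.T 1 := by have := s.mono 0; rw [s.T0] at this; simpa using this
      have hT2 := hsS.2 h1
      rw [s.sol_shift Φ h1 x hT]
      have hmem : s.shift h1 ∈ Sdw M τ1 τ2 := by
        intro k hk
        have := hsS.1 (k + 1) (by omega) ((lt_shift_num k).1 hk)
        simpa [Signal.shift] using this
      have e1 := hb _ hmem (Φ (s.idx 0) (s.T 1) x) (t - s.T 1) (sub_nonneg.2 hT)
      have e2 : ‖Φ (s.idx 0) (s.T 1) x‖ ≤ β ‖x‖ 0 :=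
        (hconst _ x _ hT0).trans ((ha _ hx).1 z hT0 hT0)
      have e3 := (hs _ (sub_nonneg.2 hT)).2.monotoneOn (norm_nonneg _) (hp _ hx 0 z) e2
      have e4 := (ha _ (hp _ hx 0 z)).1 (hm t) (sub_nonneg.2 hT)
        (max_le (by linarith) (sub_nonneg.2 hT))
      have e5 := hp _ hx _ ht
      linarith
  · rintro ⟨β, hβ, hb⟩
    refine ⟨β, hβ, fun s hs => hb s ⟨fun k _ hk => hs k hk, fun h => ?_⟩⟩
    have := (hs 0 (lt_of_lt_of_le (by simp) h)).2
    rw [s.T0] at this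
    simpa using this
end
end

section
/- Let f : ℝ^n → ℝ^n be locally Lipschitz with f(0) = 0 and such that ẋ = f(x) has unique, forward and backward complete solutions, with flow Φ_f : ℝ × ℝ^n → ℝ^n. Let V_a, V_b : ℝ^n → [0,∞) be continuous and τ̄ > 0 be such that V_b(Φ_f(τ̄, x)) ≤ e^{−τ̄} V_a(x) for all x ∈ ℝ^n. Then there exists a continuous function U : [0,τ̄] × ℝ^n → ℝ such that (i) U(0,x) = V_a(x) and U(τ̄,x) = V_b(x) for all x ∈ ℝ^n, and (ii) U(t, Φ_f(t,x)) ≤ e^{−t} U(0,x) for all (t,x) ∈ [0,τ̄] × ℝ^n. Moreover, if there are α1, α2 of class K∞ with α1(|x|) ≤ V_s(x) ≤ α2(|x|) for all x ∈ ℝ^n and s ∈ {a,b}, then there exist α̃1, α̃2 of class K∞ with α̃1(|x|) ≤ U(t,x) ≤ α̃2(|x|) for all (t,x) ∈ [0,τ̄] × ℝ^n. -/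
open Filter Set
open scoped Classical

noncomputable section

theorem aux_gronwall {E : Type*} [NormedAddCommGroup E] [NormedSpace ℝ E] [ProperSpace E]
    (f : E → E) (Φ : ℝ → E → E) (hlip : LocallyLipschitz f)
    (hΦ0 : ∀ x, Φ 0 x = x)
    (hode : ∀ x t, HasDerivAt (fun s => Φ s x) (f (Φ t x)) t) (x : E) (T : ℝ) :
    ∃ C : ℝ, 0 < C ∧ ∀ y, dist y x * C < 1 → ∀ t ∈ Icc 0 T,
      dist (Φ t y) (Φ t x) ≤ dist y x * C := by
  have hc : ∀ y, Continuous (fun s => Φ s y) := fun y =>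
    continuous_iff_continuousAt.2 fun t => (hode y t).continuousAt
  have hcomp : IsCompact ((fun s => Φ s x) '' Icc 0 T) := isCompact_Icc.image (hc x)
  obtain ⟨K, hK⟩ := (hlip.locallyLipschitzOn
    (s := Metric.cthickening 1 ((fun s => Φ s x) '' Icc 0 T))).exists_lipschitzOnWith_of_compact
      hcomp.cthickening
  refine ⟨Real.exp (K * T), Real.exp_pos _, ?_⟩
  intro y hy
  have hmono : ∀ t ≤ T, dist y x * Real.exp (K * t) ≤ dist y x * Real.exp (K * T) := by
    intro t ht
    gcongr
  have key : Icc 0 T ⊆ {t | dist (Φ t y) (Φ t x) ≤ dist y x * Real.exp (K * t)} := by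
    apply IsClosed.Icc_subset_of_forall_exists_gt
    · refine IsClosed.inter (isClosed_le ((hc y).dist (hc x)) (by fun_prop)) isClosed_Icc
    · simp [hΦ0]
    · rintro t ⟨ht, ht0, htT⟩ z hz
      have ht' : dist (Φ t y) (Φ t x) ≤ dist y x * Real.exp (K * t) := ht
      have hlt : dist (Φ t y) (Φ t x) < 1 := (ht'.trans (hmono t htT.le)).trans_lt hy
      have hev : ∀ᶠ s in nhds t, dist (Φ s y) (Φ s x) < 1 :=
        ((hc y).dist (hc x)).continuousAt.eventually (gt_mem_nhds hlt)
      obtain ⟨η, hη, hball⟩ := Metric.eventually_nhds_iff.1 hev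
      have hz' : t < z := hz
      obtain ⟨b, hb1, hb2⟩ := exists_between (lt_min (lt_min hz' htT) (by linarith : t < t + η))
      have hbz : b < z := by have := min_le_left (min z T) (t+η); have := min_le_left z T; linarith
      have hbT : b < T := by have := min_le_left (min z T) (t+η); have := min_le_right z T; linarith
      have hbη : b < t + η := by have := min_le_right (min z T) (t+η); linarith
      refine ⟨b, ?_, hb1, hbz.le⟩
      have hmemx : ∀ s ∈ Ico t b, Φ s x ∈ (fun s => Φ s x) '' Icc 0 T := fun s hs =>
        ⟨s, ⟨ht0.trans hs.1, (hs.2.trans hbT).le⟩, rfl⟩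
      have := dist_le_of_trajectories_ODE_of_mem (v := fun _ => f)
        (s := fun _ => Metric.cthickening 1 ((fun s => Φ s x) '' Icc 0 T))
        (f := fun s => Φ s y) (g := fun s => Φ s x) (a := t) (b := b) (K := K)
        (fun _ _ => hK) (hc y).continuousOn (fun s _ => (hode y s).hasDerivWithinAt)
        (fun s hs => Metric.mem_cthickening_of_dist_le _ _ _ _ (hmemx s hs)
          (hball (by rw [Real.dist_eq, abs_of_nonneg (by linarith [hs.1])]; linarith [hs.2])).le)
        (hc x).continuousOn (fun s _ => (hode x s).hasDerivWithinAt)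
        (fun s hs => Metric.self_subset_cthickening _ (hmemx s hs)) ht' b ⟨hb1.le, le_rfl⟩
      refine this.trans (le_of_eq ?_)
      rw [mul_assoc, ← Real.exp_add]
      ring_nf
  intro t ht
  exact (key ht).trans (hmono t ht.2)

theorem aux_cont {E : Type*} [NormedAddCommGroup E] [NormedSpace ℝ E] [ProperSpace E]
    (f : E → E) (Φ : ℝ → E → E) (hlip : LocallyLipschitz f)
    (hΦ0 : ∀ x, Φ 0 x = x)
    (hode : ∀ x t, HasDerivAt (fun s => Φ s x) (f (Φ t x)) t) :
    Continuous (fun p : ℝ × E => Φ p.1 p.2) := by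
  have hc : ∀ y, Continuous (fun s => Φ s y) := fun y =>
    continuous_iff_continuousAt.2 fun t => (hode y t).continuousAt
  have hlip' : LocallyLipschitz (fun x => - f x) := by
    intro x
    obtain ⟨K, t, ht, h⟩ := hlip x
    refine ⟨K, t, ht, fun a ha b hb => ?_⟩
    simpa using h ha hb
  have hode' : ∀ x t, HasDerivAt (fun s => Φ (-s) x) (- f (Φ (-t) x)) t := by
    intro x t
    have := (hode x (-t)).scomp t (hasDerivAt_neg t)
    simpa [Function.comp_def] using this
  rw [continuous_iff_continuousAt]
  rintro ⟨t0, x⟩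
  obtain ⟨C1, hC1, h1⟩ := aux_gronwall f Φ hlip hΦ0 hode x (|t0| + 1)
  obtain ⟨C2, hC2, h2⟩ := aux_gronwall (fun x => - f x) (fun t => Φ (-t)) hlip'
    (by simpa using hΦ0) hode' x (|t0| + 1)
  have hs : Tendsto (fun p : ℝ × E => dist p.2 x * C1 + dist p.2 x * C2 + dist (Φ p.1 x) (Φ t0 x))
      (nhds (t0, x)) (nhds 0) := by
    have hcc : Continuous (fun p : ℝ × E =>
        dist p.2 x * C1 + dist p.2 x * C2 + dist (Φ p.1 x) (Φ t0 x)) := by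
      have := (hc x).comp (continuous_fst (X := ℝ) (Y := E))
      simp only [Function.comp_def] at this
      fun_prop
    simpa using hcc.tendsto (t0, x)
  have e1 : ∀ᶠ p : ℝ × E in nhds (t0, x), dist p.2 x * C1 < 1 := by
    have : Continuous (fun p : ℝ × E => dist p.2 x * C1) := by fun_prop
    exact this.continuousAt.eventually (gt_mem_nhds (by simp))
  have e2 : ∀ᶠ p : ℝ × E in nhds (t0, x), dist p.2 x * C2 < 1 := by
    have : Continuous (fun p : ℝ × E => dist p.2 x * C2) := by fun_prop
    exact this.continuousAt.eventually (gt_mem_nhds (by simp))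
  have e3 : ∀ᶠ p : ℝ × E in nhds (t0, x), |p.1| < |t0| + 1 := by
    have : Continuous (fun p : ℝ × E => |p.1|) := by fun_prop
    exact this.continuousAt.eventually (gt_mem_nhds (by simp))
  rw [ContinuousAt, tendsto_iff_dist_tendsto_zero]
  refine squeeze_zero' (Eventually.of_forall fun _ => dist_nonneg) ?_ hs
  filter_upwards [e1, e2, e3] with p hp1 hp2 hp3
  have htri := dist_triangle (Φ p.1 p.2) (Φ p.1 x) (Φ t0 x)
  have n1 : 0 ≤ dist p.2 x * C1 := by positivity
  have n2 : 0 ≤ dist p.2 x * C2 := by positivity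
  rcases le_total 0 p.1 with h | h
  · have := h1 p.2 hp1 p.1 ⟨h, (le_abs_self _).trans hp3.le⟩
    linarith
  · have := h2 p.2 hp2 (-p.1) ⟨by linarith, (neg_le_abs _).trans hp3.le⟩
    simp only [neg_neg] at this
    linarith

theorem aux_rho {E : Type*} [NormedAddCommGroup E] [NormedSpace ℝ E] [ProperSpace E]
    (Φ : ℝ → E → E) (hc : Continuous (fun p : ℝ × E => Φ p.1 p.2)) (h0 : ∀ t, Φ t 0 = 0)
    (τ : ℝ) (hτ : 0 < τ) :
    ∃ ρ : ℝ ≃o ℝ, ρ 0 = 0 ∧ ∀ s ∈ Icc (-τ) τ, ∀ x, ‖Φ s x‖ ≤ ρ ‖x‖ := by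
  set K : Set (ℝ × E) := Icc (-τ) τ ×ˢ Metric.closedBall 0 1 with hKdef
  have hK : IsCompact K := isCompact_Icc.prod (isCompact_closedBall _ _)
  have hKne : K.Nonempty := ⟨(0, 0), ⟨by constructor <;> simp [hτ.le], by simp⟩⟩
  let F : ℝ → ℝ × E → ℝ := fun r p => ‖Φ p.1 (max r 0 • p.2)‖
  have hF : Continuous ↿F := by
    have : Continuous (fun q : ℝ × (ℝ × E) => ((q.2.1, max q.1 0 • q.2.2) : ℝ × E)) := by fun_prop
    exact (hc.comp this).norm
  have hFr : ∀ r, Continuous (F r) := fun r => hF.comp (Continuous.prodMk_right r)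
  have hbdd : ∀ r, BddAbove (F r '' K) := fun r => (hK.image (hFr r)).bddAbove
  let m : ℝ → ℝ := fun r => sSup (F r '' K)
  have hm : Continuous m := hK.continuous_sSup hF
  have hle : ∀ r, ∀ s ∈ Icc (-τ) τ, ∀ x : E, ‖x‖ ≤ max r 0 → ‖Φ s x‖ ≤ m r := by
    intro r s hs x hx
    apply le_csSup (hbdd r)
    refine ⟨(s, (max r 0)⁻¹ • x), ⟨hs, ?_⟩, ?_⟩
    · rw [mem_closedBall_zero_iff, norm_smul, norm_inv, Real.norm_of_nonneg (le_max_right r 0)]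
      exact inv_mul_le_one_of_le₀ hx (le_max_right _ _)
    · show ‖Φ s (max r 0 • (max r 0)⁻¹ • x)‖ = ‖Φ s x‖
      rcases eq_or_ne (max r 0) 0 with h | h
      · rw [h] at hx
        have : x = 0 := by simpa using hx
        simp [this]
      · rw [smul_inv_smul₀ h]
  have hmono : Monotone m := by
    intro r r' hrr
    apply csSup_le (hKne.image _)
    rintro _ ⟨⟨s, v⟩, ⟨hs, hv⟩, rfl⟩
    apply hle r' s hs
    have hv' : ‖v‖ ≤ 1 := by simpa using hv
    show ‖max r 0 • v‖ ≤ _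
    rw [norm_smul, Real.norm_of_nonneg (le_max_right r 0)]
    calc max r 0 * ‖v‖ ≤ max r 0 * 1 := by
          apply mul_le_mul_of_nonneg_left hv' (le_max_right _ _)
      _ ≤ max r' 0 := by rw [mul_one]; exact max_le_max_right 0 hrr
  have hm0 : ∀ r ≤ 0, m r = 0 := by
    intro r hr
    have : F r '' K = {0} := by
      have : F r = fun _ => 0 := by
        funext p
        simp [F, max_eq_right hr, h0]
      rw [this]
      exact hKne.image_const 0
    show sSup (F r '' K) = 0
    rw [this, csSup_singleton]
  have hmn : ∀ r, 0 ≤ m r := by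
    intro r
    rcases le_total r 0 with h | h
    · exact (hm0 r h).ge
    · rw [← hm0 0 le_rfl]; exact hmono h
  have hsm : StrictMono (fun r => r + m r) := strictMono_id.add_monotone hmono
  have hsurj : Function.Surjective (fun r => r + m r) := by
    apply Continuous.surjective (by fun_prop)
    · exact tendsto_atTop_mono (fun r => le_add_of_nonneg_right (hmn r)) tendsto_id
    · refine tendsto_id.congr' ?_
      filter_upwards [eventually_le_atBot 0] with r hr
      simp [hm0 r hr]
  refine ⟨StrictMono.orderIsoOfSurjective _ hsm hsurj, ?_, ?_⟩
  · simp [hm0 0 le_rfl]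
  · intro s hs x
    have := hle ‖x‖ s hs x (le_max_left _ _)
    simp only [StrictMono.coe_orderIsoOfSurjective]
    linarith [norm_nonneg x]

theorem aux_classK (α : ℝ → ℝ) (hα : ClassKInf α) (ρ : ℝ ≃o ℝ) (hρ : ρ 0 = 0) (c : ℝ)
    (hc : 0 < c) : ClassKInf (fun r => c * α (ρ r)) := by
  obtain ⟨h1, h2, h3, h4, h5⟩ := hα
  have hmap : MapsTo ρ (Ici 0) (Ici 0) := by
    intro r hr
    have := ρ.monotone hr
    rwa [hρ] at this
  refine ⟨?_, by simp [hρ, h2], ?_, ?_, ?_⟩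
  · exact continuousOn_const.mul (h1.comp ρ.continuous.continuousOn hmap)
  · intro a ha b hb hab
    exact mul_lt_mul_of_pos_left (h3 (hmap ha) (hmap hb) (ρ.strictMono hab)) hc
  · exact (h4.comp ρ.tendsto_atTop).const_mul_atTop hc
  · intro r hr
    exact mul_nonneg hc.le (h5 _ (hmap hr))

/-- Lemma 2: interpolation of two Lyapunov-like functions `V_a, V_b`
along the flow `Φ` of `ẋ = f(x)` on a time interval `[0, τ̄]`. -/
theorem interpolation_lemma {n : ℕ}
    (f : EuclideanSpace ℝ (Fin n) → EuclideanSpace ℝ (Fin n))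
    (Φ : ℝ → EuclideanSpace ℝ (Fin n) → EuclideanSpace ℝ (Fin n))
    (hlip : LocallyLipschitz f) (hf0 : f 0 = 0)
    (hΦ0 : ∀ x, Φ 0 x = x)
    (hode : ∀ x t, HasDerivAt (fun s => Φ s x) (f (Φ t x)) t)
    (huniq : ∀ γ : ℝ → EuclideanSpace ℝ (Fin n),
      (∀ t, HasDerivAt γ (f (γ t)) t) → ∀ t, γ t = Φ t (γ 0))
    (Va Vb : EuclideanSpace ℝ (Fin n) → ℝ)
    (hVaCont : Continuous Va) (hVbCont : Continuous Vb)
    (hVaNonneg : ∀ x, 0 ≤ Va x) (hVbNonneg : ∀ x, 0 ≤ Vb x)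
    (τ : ℝ) (hτ : 0 < τ)
    (hdec : ∀ x, Vb (Φ τ x) ≤ Real.exp (-τ) * Va x) :
    ∃ U : ℝ → EuclideanSpace ℝ (Fin n) → ℝ,
      ContinuousOn (fun p : ℝ × EuclideanSpace ℝ (Fin n) => U p.1 p.2)
        (Icc 0 τ ×ˢ univ) ∧
      (∀ x, U 0 x = Va x ∧ U τ x = Vb x) ∧
      (∀ t ∈ Icc (0 : ℝ) τ, ∀ x, U t (Φ t x) ≤ Real.exp (-t) * U 0 x) ∧
      (∀ α1 α2 : ℝ → ℝ, ClassKInf α1 → ClassKInf α2 →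
        (∀ x, (α1 ‖x‖ ≤ Va x ∧ Va x ≤ α2 ‖x‖) ∧ (α1 ‖x‖ ≤ Vb x ∧ Vb x ≤ α2 ‖x‖)) →
        ∃ α1' α2' : ℝ → ℝ, ClassKInf α1' ∧ ClassKInf α2' ∧
          ∀ t ∈ Icc (0 : ℝ) τ, ∀ x, α1' ‖x‖ ≤ U t x ∧ U t x ≤ α2' ‖x‖) := by
  have hcont := aux_cont f Φ hlip hΦ0 hode
  have hgrp : ∀ s t x, Φ s (Φ t x) = Φ (s + t) x := by
    intro s t x
    have := huniq (fun r => Φ (r + t) x) (fun r => (hode x (r + t)).comp_add_const r t) s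
    simpa using this.symm
  have hzero : ∀ t, Φ t 0 = 0 := by
    intro t
    have := huniq (fun _ => 0) (fun r => by simpa [hf0] using hasDerivAt_const r _) t
    exact this.symm
  obtain ⟨ρ, hρ0, hρ⟩ := aux_rho Φ hcont hzero τ hτ
  refine ⟨fun t y => Real.exp (-t) * ((1 - t / τ) * Va (Φ (-t) y) +
    (t / τ) * (Real.exp τ * Vb (Φ (τ - t) y))), ?_, ?_, ?_, ?_⟩
  · apply Continuous.continuousOn
    have c1 : Continuous (fun p : ℝ × EuclideanSpace ℝ (Fin n) => Φ (-p.1) p.2) :=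
      hcont.comp (g := fun p : ℝ × EuclideanSpace ℝ (Fin n) => Φ p.1 p.2)
        (f := fun p : ℝ × EuclideanSpace ℝ (Fin n) => (-p.1, p.2)) (by fun_prop)
    have c2 : Continuous (fun p : ℝ × EuclideanSpace ℝ (Fin n) => Φ (τ - p.1) p.2) :=
      hcont.comp (g := fun p : ℝ × EuclideanSpace ℝ (Fin n) => Φ p.1 p.2)
        (f := fun p : ℝ × EuclideanSpace ℝ (Fin n) => (τ - p.1, p.2)) (by fun_prop)
    fun_prop
  · intro x
    constructor
    · simp [hΦ0]
    · simp only [div_self hτ.ne', sub_self, hΦ0, zero_mul, zero_add, one_mul]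
      rw [← mul_assoc, ← Real.exp_add]
      simp
  · intro t ht x
    have hl0 : 0 ≤ t / τ := div_nonneg ht.1 hτ.le
    have hb : Real.exp τ * Vb (Φ τ x) ≤ Va x := by
      have := mul_le_mul_of_nonneg_left (hdec x) (Real.exp_pos τ).le
      rwa [← mul_assoc, ← Real.exp_add, add_neg_cancel, Real.exp_zero, one_mul] at this
    have e1 : Φ (-t) (Φ t x) = x := by rw [hgrp]; simp [hΦ0]
    have e2 : Φ (τ - t) (Φ t x) = Φ τ x := by rw [hgrp]; simp
    simp only [e1, e2]
    apply mul_le_mul_of_nonneg_left _ (Real.exp_pos _).le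
    have := mul_le_mul_of_nonneg_left hb hl0
    simp only [zero_div, neg_zero, Real.exp_zero, hΦ0]
    linarith
  · intro α1 α2 hα1 hα2 hV
    have hρs0 : ρ.symm 0 = 0 := by rw [OrderIso.symm_apply_eq, hρ0]
    refine ⟨fun r => Real.exp (-τ) * α1 (ρ.symm r), fun r => Real.exp τ * α2 (ρ r),
      aux_classK α1 hα1 ρ.symm hρs0 _ (Real.exp_pos _),
      aux_classK α2 hα2 ρ hρ0 _ (Real.exp_pos _), ?_⟩
    intro t ht x
    have hl0 : 0 ≤ t / τ := div_nonneg ht.1 hτ.le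
    have hl1 : 0 ≤ 1 - t / τ := sub_nonneg.2 ((div_le_one hτ).2 ht.2)
    have hρn : 0 ≤ ρ.symm ‖x‖ := by
      rw [← hρs0]; exact ρ.symm.monotone (norm_nonneg x)
    have up : ∀ s ∈ Icc (-τ) τ, α2 ‖Φ s x‖ ≤ α2 (ρ ‖x‖) := by
      intro s hs
      exact hα2.2.2.1.monotoneOn (norm_nonneg _) ((norm_nonneg _).trans (hρ s hs x)) (hρ s hs x)
    have lo : ∀ s ∈ Icc (-τ) τ, α1 (ρ.symm ‖x‖) ≤ α1 ‖Φ s x‖ := by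
      intro s hs
      refine hα1.2.2.1.monotoneOn hρn (norm_nonneg _) ?_
      rw [OrderIso.symm_apply_le]
      have := hρ (-s) ⟨by linarith [hs.2], by linarith [hs.1]⟩ (Φ s x)
      rwa [hgrp, neg_add_cancel, hΦ0] at this
    have m1 : -t ∈ Icc (-τ) τ := ⟨by linarith [ht.2], by linarith [ht.1]⟩
    have m2 : τ - t ∈ Icc (-τ) τ := ⟨by linarith [ht.2], by linarith [ht.1]⟩
    have hA1 := (lo _ m1).trans (hV (Φ (-t) x)).1.1
    have hA2 := (hV (Φ (-t) x)).1.2.trans (up _ m1)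
    have hB1 := (lo _ m2).trans (hV (Φ (τ - t) x)).2.1
    have hB2 := (hV (Φ (τ - t) x)).2.2.trans (up _ m2)
    have p1 : 0 ≤ α1 (ρ.symm ‖x‖) := hα1.2.2.2.2 _ hρn
    have p2 : 0 ≤ α2 (ρ ‖x‖) := (hVaNonneg _).trans hA2
    have eτ : 1 ≤ Real.exp τ := Real.one_le_exp hτ.le
    constructor
    · have hin : α1 (ρ.symm ‖x‖) ≤ (1 - t / τ) * Va (Φ (-t) x) +
          (t / τ) * (Real.exp τ * Vb (Φ (τ - t) x)) := by
        have hB1' : α1 (ρ.symm ‖x‖) ≤ Real.exp τ * Vb (Φ (τ - t) x) :=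
          hB1.trans (le_mul_of_one_le_left (hVbNonneg _) eτ)
        have := mul_le_mul_of_nonneg_left hA1 hl1
        have := mul_le_mul_of_nonneg_left hB1' hl0
        linarith
      exact mul_le_mul (Real.exp_le_exp.2 (by linarith [ht.2])) hin p1 (Real.exp_pos _).le
    · have hin : (1 - t / τ) * Va (Φ (-t) x) +
          (t / τ) * (Real.exp τ * Vb (Φ (τ - t) x)) ≤ Real.exp τ * α2 (ρ ‖x‖) := by
        have hA2' := hA2.trans (le_mul_of_one_le_left p2 eτ)
        have hB2' := mul_le_mul_of_nonneg_left hB2 (Real.exp_pos τ).le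
        have := mul_le_mul_of_nonneg_left hA2' hl1
        have := mul_le_mul_of_nonneg_left hB2' hl0
        linarith
      have hn : 0 ≤ Real.exp τ * α2 (ρ ‖x‖) := by positivity
      calc _ ≤ Real.exp (-t) * (Real.exp τ * α2 (ρ ‖x‖)) :=
            mul_le_mul_of_nonneg_left hin (Real.exp_pos _).le
        _ ≤ _ := mul_le_of_le_one_left hn (Real.exp_le_one_iff.2 (by linarith [ht.1]))
end
end

section
/- Let f : ℝ^n → ℝ^n be locally Lipschitz with f(0) = 0 and such that ẋ = f(x) has unique, forward and backward complete solutions, with flow Φ_f. Let τ̄ > 0, K ∈ ℕ with K ≥ 1, ρ ∈ ℝ, and let V_0,…,V_K : ℝ^n → ℝ be continuously differentiable positive definite functions such that, for every k ∈ {1,…,K} and every x ∈ ℝ^n, ∇V_k(x)·f(x) + (K/τ̄)(V_k(x) − V_{k−1}(x)) ≤ ρ V_k(x) and ∇V_{k−1}(x)·f(x) + (K/τ̄)(V_k(x) − V_{k−1}(x)) ≤ ρ V_{k−1}(x). Then V_K(Φ_f(τ̄, x)) ≤ e^{ρτ̄} V_0(x) for all x ∈ ℝ^n. -/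
open Filter Set
open scoped Classical

noncomputable section

theorem chain_step (a b a' b' : ℝ → ℝ) (c ρ t0 t1 : ℝ) (hc : 0 < c) (ht : c * (t1 - t0) = 1)
    (ha : ∀ t, HasDerivAt a (a' t) t) (hb : ∀ t, HasDerivAt b (b' t) t)
    (h1 : ∀ t, b' t + c * (b t - a t) ≤ ρ * b t)
    (h2 : ∀ t, a' t + c * (b t - a t) ≤ ρ * a t) :
    Real.exp (-(ρ * t1)) * b t1 ≤ Real.exp (-(ρ * t0)) * a t0 := by
  have hlt : t0 ≤ t1 := by
    by_contra! h
    nlinarith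
  have hd : ∀ t, HasDerivAt
      (fun t => Real.exp (-(ρ * t)) * (a t + c * (t - t0) * (b t - a t)))
      (Real.exp (-(ρ * t)) * (-(ρ * 1)) * (a t + c * (t - t0) * (b t - a t)) +
        Real.exp (-(ρ * t)) * (a' t + (c * 1 * (b t - a t) + c * (t - t0) * (b' t - a' t)))) t := by
    intro t
    have e1 := (((hasDerivAt_id t).const_mul ρ).neg).exp
    have e2 := ((hasDerivAt_id t).sub_const t0).const_mul c
    exact e1.mul ((ha t).add (e2.mul ((hb t).sub (ha t))))
  have hanti := antitoneOn_of_deriv_nonpos (convex_Icc t0 t1)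
    (fun t _ => (hd t).continuousAt.continuousWithinAt)
    (fun t _ => (hd t).differentiableAt.differentiableWithinAt) (by
      intro t htt
      rw [interior_Icc] at htt
      rw [(hd t).deriv]
      have p0 : 0 ≤ c * (t - t0) := mul_nonneg hc.le (by linarith [htt.1])
      have p1 : 0 ≤ 1 - c * (t - t0) := by
        rw [← ht, ← mul_sub]
        exact mul_nonneg hc.le (by linarith [htt.2])
      have q1 := mul_le_mul_of_nonneg_left (h1 t) p0
      have q2 := mul_le_mul_of_nonneg_left (h2 t) p1
      have := mul_nonpos_of_nonneg_of_nonpos (Real.exp_pos (-(ρ * t))).le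
        (show -ρ * (a t + c * (t - t0) * (b t - a t)) +
          (a' t + (c * 1 * (b t - a t) + c * (t - t0) * (b' t - a' t))) ≤ 0 by linarith)
      linarith)
  have := hanti (left_mem_Icc.2 hlt) (right_mem_Icc.2 hlt) hlt
  simpa [ht] using this

/-- Lemma 4: the `K`-step differential inequalities on the `C¹` positive
definite functions `V_0, …, V_K` imply `V_K(Φ(τ̄,x)) ≤ e^{ρτ̄} V_0(x)`. -/
theorem gradient_chain_lemma {n : ℕ}
    (f : EuclideanSpace ℝ (Fin n) → EuclideanSpace ℝ (Fin n))
    (Φ : ℝ → EuclideanSpace ℝ (Fin n) → EuclideanSpace ℝ (Fin n))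
    (hlip : LocallyLipschitz f) (hf0 : f 0 = 0)
    (hΦ0 : ∀ x, Φ 0 x = x)
    (hode : ∀ x t, HasDerivAt (fun s => Φ s x) (f (Φ t x)) t)
    (huniq : ∀ γ : ℝ → EuclideanSpace ℝ (Fin n),
      (∀ t, HasDerivAt γ (f (γ t)) t) → ∀ t, γ t = Φ t (γ 0))
    (τbar : ℝ) (hτbar : 0 < τbar) (K : ℕ) (hK : 1 ≤ K) (ρ : ℝ)
    (V : ℕ → EuclideanSpace ℝ (Fin n) → ℝ)
    (hV : ∀ k ≤ K, ContDiff ℝ 1 (V k))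
    (hVpos : ∀ k ≤ K, V k 0 = 0 ∧ ∀ x, x ≠ 0 → 0 < V k x)
    (hineq : ∀ k, 1 ≤ k → k ≤ K → ∀ x,
      fderiv ℝ (V k) x (f x) + ((K : ℝ) / τbar) * (V k x - V (k - 1) x) ≤ ρ * V k x ∧
      fderiv ℝ (V (k - 1)) x (f x) + ((K : ℝ) / τbar) * (V k x - V (k - 1) x) ≤
        ρ * V (k - 1) x) :
    ∀ x, V K (Φ τbar x) ≤ Real.exp (ρ * τbar) * V 0 x := by
  intro x
  have hK0 : (0 : ℝ) < K := by exact_mod_cast hK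
  have hder : ∀ k ≤ K, ∀ t, HasDerivAt (fun s => V k (Φ s x))
      (fderiv ℝ (V k) (Φ t x) (f (Φ t x))) t := fun k hk t =>
    (((hV k hk).differentiable one_ne_zero) (Φ t x)).hasFDerivAt.comp_hasDerivAt t (hode x t)
  have key : ∀ k ≤ K, Real.exp (-(ρ * (k * (τbar / K)))) * V k (Φ (k * (τbar / K)) x) ≤ V 0 x := by
    intro k
    induction k with
    | zero => intro _; simp [hΦ0]
    | succ k ih =>
      intro hk
      refine le_trans ?_ (ih (by omega))
      refine chain_step (fun s => V k (Φ s x)) (fun s => V (k + 1) (Φ s x)) _ _ (K / τbar) ρ _ _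
        (by positivity) ?_ (hder k (by omega)) (hder (k + 1) hk)
        (fun t => (hineq (k + 1) (by omega) hk (Φ t x)).1)
        (fun t => (hineq (k + 1) (by omega) hk (Φ t x)).2)
      push_cast
      field_simp
      ring
  have h := key K le_rfl
  rw [mul_div_cancel₀ _ hK0.ne'] at h
  have h' := mul_le_mul_of_nonneg_left h (Real.exp_pos (ρ * τbar)).le
  rwa [← mul_assoc, ← Real.exp_add, add_neg_cancel, Real.exp_zero, one_mul] at h'
end
end
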